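/- arXiv:1410.2420 — 2 statements merged into one kernel-verified Lean document; each statement's English description precedes it below -/
import Mathlib

section
/- Let p ≥ 11 be a prime and let a, b, c be nonzero elements of O_K, coprime in O_K, with a^p + b^p + c^p = 0. Then, after permuting a, b, c among themselves and multiplying the triple (a, b, c) by a suitable unit of O_K, one of the following two conditions holds: (1) 2 divides a, 2 does not divide b·c, and b is a square modulo 4·O_K; or (2) 2 does not divide a·b·c and the pair (a^p mod 4, b^p mod 4) is one of the four pairs (u, 1+2u), (3, u²), (1, u), (1, u²+2u) modulo 4·O_K. -/
open Polynomial

/-- `K = ℚ(√5)`, the real quadratic field obtained by adjoining `√5` to `ℚ`. -/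
noncomputable def K : IntermediateField ℚ ℝ := IntermediateField.adjoin ℚ {Real.sqrt 5}

/-- `O_K`, the ring of integers of `K = ℚ(√5)`. -/
noncomputable abbrev OK : Type := NumberField.RingOfIntegers K

lemma sqrt5_mem : Real.sqrt 5 ∈ K :=
  IntermediateField.subset_adjoin ℚ {Real.sqrt 5} rfl

/-- `(1 + √5)/2` as an element of `K`. -/
noncomputable def uK : K :=
  ⟨(1 + Real.sqrt 5) / 2,
    div_mem (add_mem (one_mem K) sqrt5_mem)
      (by exact_mod_cast SubfieldClass.ratCast_mem K 2)⟩

lemma uK_integral : IsIntegral ℤ uK := by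
  have h : IsIntegral ℤ ((1 + Real.sqrt 5) / 2 : ℝ) := by
    refine ⟨X ^ 2 - X - 1, by monicity!, ?_⟩
    have h5 : Real.sqrt 5 ^ 2 = 5 := Real.sq_sqrt (by norm_num)
    simp only [eval₂_sub, eval₂_pow, eval₂_X, eval₂_one]
    nlinarith [h5]
  rw [show ((1 + Real.sqrt 5) / 2 : ℝ) = algebraMap K ℝ uK from rfl] at h
  exact (isIntegral_algebraMap_iff (algebraMap K ℝ).injective).mp h

/-- `u = (1 + √5)/2` as an element of `O_K`; it satisfies `u ^ 2 = 1 + u`. -/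
noncomputable def u : OK := ⟨uK, uK_integral⟩

namespace GoldenField

/-- The residue ring `O_K / 4`, presented as `(ℤ/4)[ω]` with `ω² = 1 + ω`. -/
abbrev R4 : Type := QuadraticAlgebra (ZMod 4) 1 1

lemma forall_R4 {P : R4 → Prop} : (∀ z, P z) ↔ ∀ x y, P ⟨x, y⟩ :=
  ⟨fun h x y => h ⟨x, y⟩, fun h z => h z.re z.im⟩

lemma exists_R4 {P : R4 → Prop} : (∃ z, P z) ↔ ∃ x y, P ⟨x, y⟩ :=
  ⟨fun ⟨z, h⟩ => ⟨z.re, z.im, h⟩, fun ⟨x, y, h⟩ => ⟨⟨x, y⟩, h⟩⟩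

lemma pow_six_R4 : ∀ z : R4, 2 * z ≠ 0 → z ^ 6 = 1 := by
  rw [forall_R4]; decide

lemma two_mul_mul_R4 : ∀ z w : R4, 2 * z ≠ 0 → 2 * w ≠ 0 → 2 * (z * w) ≠ 0 := by
  simp only [forall_R4]; decide

lemma exists_eq_pow_R4 : ∀ z : R4, 2 * z ≠ 0 → ∃ k : Fin 6, z = ⟨0, 1⟩ ^ (k : ℕ) ∨
    z = -⟨0, 1⟩ ^ (k : ℕ) := by
  rw [forall_R4]; decide

/-- The four pairs `(u, 1+2u)`, `(3, u²)`, `(1, u)`, `(1, u²+2u)` modulo 4. -/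
def NormalPair (z w : R4) : Prop :=
  (z = ⟨0, 1⟩ ∧ w = ⟨1, 2⟩) ∨ (z = 3 ∧ w = ⟨1, 1⟩) ∨ (z = 1 ∧ w = ⟨0, 1⟩) ∨ (z = 1 ∧ w = ⟨1, 3⟩)

instance (z w : R4) : Decidable (NormalPair z w) := by unfold NormalPair; infer_instance

lemma exists_normalPair : ∀ z w : R4, 2 * z ≠ 0 → 2 * w ≠ 0 → 2 * (-z - w) ≠ 0 →
    ∃ e : R4, 2 * e ≠ 0 ∧ ∃ σ : Equiv.Perm (Fin 3),
      NormalPair (e * ![z, w, -z - w] (σ 0)) (e * ![z, w, -z - w] (σ 1)) := by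
  simp only [forall_R4, exists_R4]
  set_option synthInstance.maxSize 10000 in
  decide

open Real in
/-- The embedding of `ℚ[ω]`, `ω² = 1 + ω`, into `ℝ` sending `ω` to the golden ratio. -/
noncomputable def toReal : QuadraticAlgebra ℚ 1 1 →ₐ[ℚ] ℝ :=
  QuadraticAlgebra.lift ⟨goldenRatio, by
    rw [← sq, goldenRatio_sq, one_smul, one_smul, add_comm]⟩

lemma toReal_apply (z : QuadraticAlgebra ℚ 1 1) :
    toReal z = z.re + z.im * Real.goldenRatio := by
  simp [toReal, Rat.smul_def]

lemma eq_zero_of_add_mul_goldenRatio_eq_zero {x y : ℚ}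
    (h : (x : ℝ) + y * Real.goldenRatio = 0) : x = 0 ∧ y = 0 := by
  have hy : y = 0 := by
    by_contra hy
    apply Real.goldenRatio_irrational
    refine ⟨-x / y, ?_⟩
    have : (y : ℝ) ≠ 0 := by exact_mod_cast hy
    push_cast
    rw [div_eq_iff this]
    linarith
  subst hy
  simpa using h

lemma toReal_injective : Function.Injective toReal := by
  rw [injective_iff_map_eq_zero]
  intro z hz
  rw [toReal_apply] at hz
  obtain ⟨h1, h2⟩ := eq_zero_of_add_mul_goldenRatio_eq_zero hz
  ext <;> assumption

lemma exists_toReal_eq_of_mem_K {x : ℝ} (hx : x ∈ K) : ∃ z, toReal z = x := by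
  have inv_mem (z : QuadraticAlgebra ℚ 1 1) : ∃ w, toReal w = (toReal z)⁻¹ := by
    rcases eq_or_ne z 0 with rfl | hz
    · exact ⟨0, by simp⟩
    have key : z * star z = algebraMap ℚ _ z.norm :=
      (QuadraticAlgebra.algebraMap_norm_eq_mul_star z).symm
    have hstar : star z ≠ 0 := by simpa using hz
    have hn : z.norm ≠ 0 := by
      intro h
      rw [h, map_zero] at key
      have := congrArg toReal key
      rw [map_mul, map_zero, mul_eq_zero, ← map_zero toReal] at this
      exact this.elim (fun h => hz (toReal_injective h)) (fun h => hstar (toReal_injective h))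
    refine ⟨z.norm⁻¹ • star z, eq_inv_of_mul_eq_one_right ?_⟩
    rw [← map_mul, mul_smul_comm, key, Algebra.algebraMap_eq_smul_one, smul_smul,
      inv_mul_cancel₀ hn, one_smul, map_one]
  have hle : K ≤ toReal.range.toIntermediateField (by
      rintro _ ⟨z, rfl⟩; exact inv_mem z) := by
    rw [K, IntermediateField.adjoin_le_iff, Set.singleton_subset_iff]
    refine ⟨⟨-1, 2⟩, ?_⟩
    simp [toReal_apply, Real.goldenRatio]
    ring
  exact hle hx

lemma exists_int_of_trace_norm {x : ℚ} {t n : ℤ} (y : ℚ) (ht : 2 * x + y = t)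
    (hn : x ^ 2 + x * y - y ^ 2 = n) : ∃ i j : ℤ, x = i ∧ y = j := by
  have h5 : (5 * y) ^ 2 = ((5 * (t ^ 2 - 4 * n) : ℤ) : ℚ) := by
    push_cast; rw [← ht, ← hn]; ring
  obtain ⟨m, hm⟩ : ∃ m : ℤ, (m : ℚ) = 5 * y := by
    have : IsIntegral ℤ (5 * y) := by
      refine IsIntegral.of_pow (n := 2) (by norm_num) ?_
      rw [h5]; exact isIntegral_algebraMap (R := ℤ) (A := ℚ)
    obtain ⟨m, hm⟩ := IsIntegrallyClosed.isIntegral_iff.mp this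
    exact ⟨m, hm⟩
  rw [← hm] at h5
  have h5' : m ^ 2 = 5 * (t ^ 2 - 4 * n) := by exact_mod_cast h5
  obtain ⟨j, rfl⟩ : (5 : ℤ) ∣ m :=
    Int.Prime.dvd_pow' (p := 5) (by norm_num) (Dvd.intro _ h5'.symm)
  have hy : y = j := by push_cast at hm; linarith
  have hpar : 5 * j ^ 2 = t ^ 2 - 4 * n := by linarith
  obtain ⟨i, hi⟩ : (2 : ℤ) ∣ t - j := by
    have : (2 : ℤ) ∣ (t - j) ^ 2 := ⟨3 * j ^ 2 + 2 * n - t * j, by linear_combination -hpar⟩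
    exact Int.Prime.dvd_pow' (p := 2) (by norm_num) this
  refine ⟨i, j, ?_, hy⟩
  have : (t : ℚ) - j = 2 * i := by exact_mod_cast hi
  linarith

lemma exists_int_of_isIntegral {z : QuadraticAlgebra ℚ 1 1} (hz : IsIntegral ℤ z) :
    ∃ i j : ℤ, z.re = i ∧ z.im = j := by
  have hs : IsIntegral ℤ (star z) :=
    hz.map (starRingEnd (QuadraticAlgebra ℚ 1 1)).toIntAlgHom
  have inj : Function.Injective (algebraMap ℚ (QuadraticAlgebra ℚ 1 1)) :=
    (algebraMap ℚ (QuadraticAlgebra ℚ 1 1)).injective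
  have ht : IsIntegral ℤ z.trace := by
    rw [← isIntegral_algebraMap_iff inj, QuadraticAlgebra.algebraMap_trace_eq_add_star]
    exact hz.add hs
  have hn : IsIntegral ℤ z.norm := by
    rw [← isIntegral_algebraMap_iff inj, QuadraticAlgebra.algebraMap_norm_eq_mul_star]
    exact hz.mul hs
  obtain ⟨t, ht⟩ := IsIntegrallyClosed.isIntegral_iff.mp ht
  obtain ⟨n, hn⟩ := IsIntegrallyClosed.isIntegral_iff.mp hn
  refine exists_int_of_trace_norm (t := t) (n := n) _ ?_ ?_
  · simpa [QuadraticAlgebra.trace_def] using ht.symm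
  · rw [QuadraticAlgebra.norm_def] at hn
    simp at hn
    rw [hn]; ring

lemma coe_u : ((u : K) : ℝ) = Real.goldenRatio := rfl

lemma u_mul_u : u * u = (1 : ℤ) • (1 : OK) + (1 : ℤ) • u := by
  apply NumberField.RingOfIntegers.coe_injective
  apply Subtype.val_injective
  rw [one_smul, one_smul, map_mul, map_add, map_one]
  push_cast
  rw [coe_u, ← sq, Real.goldenRatio_sq, add_comm]

/-- The homomorphism `ℤ[ω] → O_K` sending `ω` to `u`. -/
noncomputable def ofQuadratic : QuadraticAlgebra ℤ 1 1 →ₐ[ℤ] OK :=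
  QuadraticAlgebra.lift ⟨u, u_mul_u⟩

lemma coe_ofQuadratic (z : QuadraticAlgebra ℤ 1 1) :
    (((ofQuadratic z : OK) : K) : ℝ) = z.re + z.im * Real.goldenRatio := by
  simp [ofQuadratic, coe_u]

lemma ofQuadratic_bijective : Function.Bijective ofQuadratic := by
  constructor
  · rw [injective_iff_map_eq_zero]
    intro z hz
    have h := coe_ofQuadratic z
    rw [hz] at h
    have := eq_zero_of_add_mul_goldenRatio_eq_zero (x := z.re) (y := z.im) (by simpa using h.symm)
    ext
    · exact_mod_cast this.1
    · exact_mod_cast this.2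
  · intro w
    obtain ⟨z, hz⟩ := exists_toReal_eq_of_mem_K (w : K).2
    have hint : IsIntegral ℤ z := by
      rw [← isIntegral_algHom_iff (toReal.restrictScalars ℤ) toReal_injective]
      change IsIntegral ℤ (toReal z)
      rw [hz]
      exact w.2.map (K.val.restrictScalars ℤ)
    obtain ⟨i, j, hi, hj⟩ := exists_int_of_isIntegral hint
    refine ⟨⟨i, j⟩, ?_⟩
    apply NumberField.RingOfIntegers.coe_injective
    apply Subtype.val_injective
    rw [coe_ofQuadratic, ← hz, toReal_apply, hi, hj]
    simp

/-- Reduction modulo 4 on `ℤ[ω]`. -/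
def reduceQuadratic : QuadraticAlgebra ℤ 1 1 →ₐ[ℤ] R4 :=
  QuadraticAlgebra.lift ⟨⟨0, 1⟩, by decide⟩

/-- Reduction modulo 4 on `O_K`. -/
noncomputable def reduce : OK →+* R4 :=
  reduceQuadratic.toRingHom.comp
    (AlgEquiv.ofBijective ofQuadratic ofQuadratic_bijective).symm.toRingEquiv.toRingHom

lemma reduce_ofQuadratic (z : QuadraticAlgebra ℤ 1 1) :
    reduce (ofQuadratic z) = ⟨z.re, z.im⟩ := by
  have : (AlgEquiv.ofBijective ofQuadratic ofQuadratic_bijective).symm (ofQuadratic z) = z :=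
    (AlgEquiv.ofBijective ofQuadratic ofQuadratic_bijective).symm_apply_apply z
  change reduceQuadratic ((AlgEquiv.ofBijective ofQuadratic ofQuadratic_bijective).symm
    (ofQuadratic z)) = _
  rw [this]
  ext <;> simp [reduceQuadratic]

lemma reduce_u : reduce u = ⟨0, 1⟩ := by
  have h : u = ofQuadratic ⟨0, 1⟩ := by simp [ofQuadratic]
  rw [h, reduce_ofQuadratic]
  simp

lemma reduce_eq_zero_iff {x : OK} : reduce x = 0 ↔ 4 ∣ x := by
  constructor
  · obtain ⟨z, rfl⟩ := ofQuadratic_bijective.2 x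
    rw [reduce_ofQuadratic]
    intro h
    obtain ⟨i, hi⟩ := (ZMod.intCast_zmod_eq_zero_iff_dvd z.re 4).mp
      (congrArg QuadraticAlgebra.re h)
    obtain ⟨j, hj⟩ := (ZMod.intCast_zmod_eq_zero_iff_dvd z.im 4).mp
      (congrArg QuadraticAlgebra.im h)
    have hz : z = 4 * ⟨i, j⟩ := by
      ext <;> simp [hi, hj, QuadraticAlgebra.re_ofNat, QuadraticAlgebra.im_ofNat]
    exact ⟨ofQuadratic ⟨i, j⟩, by rw [hz, map_mul, map_ofNat]⟩
  · rintro ⟨y, rfl⟩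
    rw [map_mul, map_ofNat, show (4 : R4) = 0 by decide, zero_mul]

lemma four_dvd_sub_iff {x y : OK} : 4 ∣ x - y ↔ reduce x = reduce y := by
  rw [← reduce_eq_zero_iff, map_sub, sub_eq_zero]

lemma two_dvd_iff {x : OK} : 2 ∣ x ↔ 2 * reduce x = 0 := by
  rw [← map_ofNat reduce 2, ← map_mul, reduce_eq_zero_iff, show (4 : OK) = 2 * 2 by norm_num]
  exact (mul_dvd_mul_iff_left two_ne_zero).symm

lemma not_isUnit_two : ¬ IsUnit (2 : OK) := by
  intro h
  have := two_dvd_iff.mp (h.dvd (a := (1 : OK)))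
  rw [map_one] at this
  exact absurd this (by decide)

lemma not_two_dvd_mul {x y : OK} (hx : ¬ 2 ∣ x) (hy : ¬ 2 ∣ y) : ¬ 2 ∣ x * y := by
  rw [two_dvd_iff] at *
  rw [map_mul]
  exact two_mul_mul_R4 _ _ hx hy

/-- `u` as a unit of `O_K`. -/
noncomputable def uUnit : OKˣ :=
  Units.mkOfMulEqOne u (u - 1) (by rw [mul_sub, u_mul_u]; simp)

lemma exists_unit_reduce_eq (z : R4) (hz : 2 * z ≠ 0) : ∃ ξ : OKˣ, reduce ξ = z := by
  obtain ⟨k, rfl | rfl⟩ := exists_eq_pow_R4 z hz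
  · exact ⟨uUnit ^ (k : ℕ), by simp [uUnit, reduce_u]⟩
  · exact ⟨-uUnit ^ (k : ℕ), by simp [uUnit, reduce_u]⟩

/-- On units of `R4`, raising twice to the power of a prime `p ≥ 11` is trivial. -/
lemma pow_pow_prime_R4 {p : ℕ} (hp : p.Prime) (hp11 : 11 ≤ p) {z : R4} (hz : 2 * z ≠ 0) :
    (z ^ p) ^ p = z := by
  have hmod : p * p % 6 = 1 := by
    have h2 : ¬ 2 ∣ p := fun h => by
      have := (Nat.prime_dvd_prime_iff_eq Nat.prime_two hp).mp h; omega
    have h3 : ¬ 3 ∣ p := fun h => by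
      have := (Nat.prime_dvd_prime_iff_eq Nat.prime_three hp).mp h; omega
    have : p % 6 = 1 ∨ p % 6 = 5 := by omega
    rcases this with h | h <;> simp [Nat.mul_mod, h]
  rw [← pow_mul, ← Nat.div_add_mod (p * p) 6, hmod, pow_add, pow_mul, pow_six_R4 z hz, one_pow,
    one_mul, pow_one]

lemma two_mul_pow_R4 {z : R4} (hz : 2 * z ≠ 0) (n : ℕ) : 2 * z ^ n ≠ 0 := by
  induction n with
  | zero => rw [pow_zero]; decide
  | succ n ih => rw [pow_succ]; exact two_mul_mul_R4 _ _ ih hz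

/-- The normalisation at an element divisible by 2: the next entry becomes a square. -/
lemma exists_unit_four_dvd_sub_sq {x y z : OK} (hx : 2 ∣ x) (hy : ¬ 2 ∣ y) (hz : ¬ 2 ∣ z) :
    ∃ ξ : OKˣ, (2 : OK) ∣ ξ * x ∧ ¬ (2 : OK) ∣ ξ * y * (ξ * z) ∧
      ∃ t : OK, (4 : OK) ∣ ξ * y - t ^ 2 := by
  have hy' : 2 * reduce y ≠ 0 := fun h => hy (two_dvd_iff.mpr h)
  obtain ⟨ξ, hξ⟩ := exists_unit_reduce_eq _ (two_mul_pow_R4 hy' 5)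
  refine ⟨ξ, hx.mul_left _, ?_, 1, ?_⟩
  · apply not_two_dvd_mul <;> rwa [Units.dvd_mul_left]
  · rw [four_dvd_sub_iff, map_mul, hξ, ← pow_succ, pow_six_R4 _ hy', one_pow, map_one]

end GoldenField

open GoldenField

set_option maxHeartbeats 1000000 in
/-- **Lemma 1.** Let `p ≥ 11` be prime and `a, b, c` nonzero coprime elements of
`O_K` with `a^p + b^p + c^p = 0`.  After permuting `a, b, c` and multiplying the
triple by a suitable unit `ξ` of `O_K`, either (1) `2 ∣ a'`, `2 ∤ b'·c'` and `b'`
is a square mod `4·O_K`, or (2) `2 ∤ a'·b'·c'` and `(a'^p, b'^p)` is congruent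
mod `4·O_K` to one of `(u, 1+2u)`, `(3, u²)`, `(1, u)`, `(1, u²+2u)`. -/
theorem normalisation_of_solutions (p : ℕ) (hp : p.Prime) (hp11 : 11 ≤ p)
    (a b c : OK) (ha : a ≠ 0) (hb : b ≠ 0) (hc : c ≠ 0)
    (hcop : ∀ d : OK, d ∣ a → d ∣ b → d ∣ c → IsUnit d)
    (hfermat : a ^ p + b ^ p + c ^ p = 0) :
    ∃ (ξ : OKˣ) (σ : Equiv.Perm (Fin 3)) (a' b' c' : OK),
      a' = (ξ : OK) * ![a, b, c] (σ 0) ∧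
      b' = (ξ : OK) * ![a, b, c] (σ 1) ∧
      c' = (ξ : OK) * ![a, b, c] (σ 2) ∧
      (((2 : OK) ∣ a' ∧ ¬ (2 : OK) ∣ b' * c' ∧ ∃ x : OK, (4 : OK) ∣ b' - x ^ 2) ∨
        (¬ (2 : OK) ∣ a' * b' * c' ∧
          (((4 : OK) ∣ a' ^ p - u ∧ (4 : OK) ∣ b' ^ p - (1 + 2 * u)) ∨
            ((4 : OK) ∣ a' ^ p - 3 ∧ (4 : OK) ∣ b' ^ p - u ^ 2) ∨
            ((4 : OK) ∣ a' ^ p - 1 ∧ (4 : OK) ∣ b' ^ p - u) ∨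
            ((4 : OK) ∣ a' ^ p - 1 ∧ (4 : OK) ∣ b' ^ p - (u ^ 2 + 2 * u))))) := by
  have unit_mul {ξ : OKˣ} {x : OK} (hx : ¬ 2 ∣ x) : ¬ (2 : OK) ∣ ξ * x := by
    rwa [Units.dvd_mul_left]
  have odd_of_dvd {x y z : OK} (h : x ^ p + y ^ p + z ^ p = 0)
      (hd : ∀ d : OK, d ∣ x → d ∣ y → d ∣ z → IsUnit d) (hx : 2 ∣ x) : ¬ 2 ∣ y := by
    intro hy
    refine not_isUnit_two (hd 2 hx hy ?_)
    by_contra hz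
    have hzp : ¬ (2 : OK) ∣ z ^ p := by
      rw [two_dvd_iff, map_pow]
      exact two_mul_pow_R4 (fun h => hz (two_dvd_iff.mpr h)) p
    refine hzp ?_
    rw [← neg_eq_of_add_eq_zero_right h]
    exact ((dvd_pow hx hp.ne_zero).add (dvd_pow hy hp.ne_zero)).neg_right
  by_cases ha2 : (2 : OK) ∣ a
  · have hb2 := odd_of_dvd hfermat hcop ha2
    have hc2 := odd_of_dvd (x := a) (y := c) (z := b) (by rw [← hfermat]; ring)
      (fun d h1 h2 h3 => hcop d h1 h3 h2) ha2
    obtain ⟨ξ, h⟩ := exists_unit_four_dvd_sub_sq ha2 hb2 hc2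
    exact ⟨ξ, 1, _, _, _, rfl, rfl, rfl, Or.inl h⟩
  by_cases hb2 : (2 : OK) ∣ b
  · have hc2 := odd_of_dvd (x := b) (y := c) (z := a) (by rw [← hfermat]; ring)
      (fun d h1 h2 h3 => hcop d h3 h1 h2) hb2
    obtain ⟨ξ, h⟩ := exists_unit_four_dvd_sub_sq hb2 ha2 hc2
    exact ⟨ξ, Equiv.swap 0 1, _, _, _, rfl, rfl, rfl, Or.inl h⟩
  by_cases hc2 : (2 : OK) ∣ c
  · obtain ⟨ξ, h⟩ := exists_unit_four_dvd_sub_sq hc2 hb2 ha2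
    exact ⟨ξ, Equiv.swap 0 2, _, _, _, rfl, rfl, rfl, Or.inl h⟩
  have hC : reduce c ^ p = -reduce a ^ p - reduce b ^ p := by
    have := congrArg reduce hfermat
    simp only [map_add, map_pow, map_zero] at this
    linear_combination this
  have red {x : OK} (hx : ¬ 2 ∣ x) : 2 * reduce x ^ p ≠ 0 :=
    two_mul_pow_R4 (fun h => hx (two_dvd_iff.mpr h)) p
  obtain ⟨e, he, σ, hσ⟩ := exists_normalPair _ _ (red ha2) (red hb2) (hC ▸ red hc2)
  obtain ⟨ξ, hξ⟩ := exists_unit_reduce_eq _ (two_mul_pow_R4 he p)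
  have odd_entry (i : Fin 3) : ¬ 2 ∣ ![a, b, c] i := by
    fin_cases i <;> assumption
  have reduce_entry (i : Fin 3) : reduce ((ξ * ![a, b, c] i) ^ p) =
      e * ![reduce a ^ p, reduce b ^ p, -reduce a ^ p - reduce b ^ p] i := by
    rw [map_pow, map_mul, mul_pow, hξ, pow_pow_prime_R4 hp hp11 he]
    fin_cases i <;> simp [← hC]
  refine ⟨ξ, σ, _, _, _, rfl, rfl, rfl, Or.inr ⟨?_, ?_⟩⟩
  · exact not_two_dvd_mul (not_two_dvd_mul (unit_mul (odd_entry _)) (unit_mul (odd_entry _)))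
      (unit_mul (odd_entry _))
  · simp only [four_dvd_sub_iff, reduce_entry, map_add, map_mul, map_pow, map_one, map_ofNat,
      reduce_u]
    exact hσ
end

section
/- Let p ≥ 5 be a prime, let a, b, c be nonzero elements of O_K, coprime in O_K, with a^p + b^p + c^p = 0, and set A = a^p, B = b^p, C = c^p. Let 𝔮 be a nonzero prime ideal of O_K not containing 2, and suppose v_𝔮(a·b·c) ≥ 1. Then v_𝔮(16·(A² + A·B + B²)) = 0 and p divides v_𝔮(16·(A·B·C)²). -/
open Polynomial

/-- A number field in which every element is within norm distance `< 1` of an algebraic integer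
has a principal ring of integers. -/
theorem isPrincipalIdealRing_of_exists_norm_sub_lt_one {F : Type*} [Field F] [NumberField F]
    (h : ∀ z : F, ∃ w : NumberField.RingOfIntegers F, |Algebra.norm ℚ (z - w)| < 1) :
    IsPrincipalIdealRing (NumberField.RingOfIntegers F) := by
  refine ⟨fun I => ?_⟩
  by_cases hI : I = ⊥
  · exact hI ▸ bot_isPrincipal
  obtain ⟨x₀, hx₀, hx₀0⟩ := Submodule.exists_mem_ne_zero_of_ne_bot hI
  obtain ⟨y, ⟨hyI, hy0⟩, hmin⟩ := (measure fun x : NumberField.RingOfIntegers F =>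
    (Algebra.norm ℤ x).natAbs).wf.has_min {x | x ∈ I ∧ x ≠ 0} ⟨x₀, hx₀, hx₀0⟩
  refine ⟨y, le_antisymm (fun x hx => ?_) ((Ideal.span_singleton_le_iff_mem I).mpr hyI)⟩
  obtain ⟨w, hw⟩ := h ((x : F) / y)
  have hyF : (y : F) ≠ 0 := by simpa using hy0
  have hlt : |Algebra.norm ℤ (x - w * y)| < |Algebra.norm ℤ y| := by
    have hfac : ((x - w * y : NumberField.RingOfIntegers F) : F) = ((x : F) / y - w) * y := by
      push_cast
      field_simp
    have hy : 0 < |Algebra.norm ℚ (y : F)| := abs_pos.mpr (Algebra.norm_ne_zero_iff.mpr hyF)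
    have : |Algebra.norm ℚ ((x - w * y : NumberField.RingOfIntegers F) : F)| <
        |Algebra.norm ℚ (y : F)| := by
      rw [hfac, map_mul, abs_mul]
      nlinarith
    rw [← Algebra.coe_norm_int, ← Algebra.coe_norm_int] at this
    exact_mod_cast this
  have hr : x - w * y = 0 := by
    by_contra hne
    refine hmin _ ⟨I.sub_mem hx (I.mul_mem_left w hyI), hne⟩ ?_
    change (Algebra.norm ℤ (x - w * y)).natAbs < (Algebra.norm ℤ y).natAbs
    rw [Int.abs_eq_natAbs, Int.abs_eq_natAbs] at hlt
    exact_mod_cast hlt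
  exact Ideal.mem_span_singleton'.mpr ⟨w, (sub_eq_zero.mp hr).symm⟩

instance fact_sq_ne_one_add : Fact (∀ r : ℚ, r ^ 2 ≠ 1 + 1 * r) := by
  refine ⟨fun r hr => ?_⟩
  have h5 : Irrational (√(5 : ℕ)) := Nat.Prime.irrational_sqrt (by norm_num)
  refine h5 ⟨|2 * r - 1|, ?_⟩
  rw [eq_comm, Real.sqrt_eq_iff_mul_self_eq (by positivity) (by positivity)]
  have : |2 * r - 1| * |2 * r - 1| = 5 := by
    rw [abs_mul_abs_self]
    linear_combination 4 * hr
  exact_mod_cast this.symm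

/-- The embedding of `ℚ[ω]`, `ω² = 1 + ω`, into `ℝ` sending `ω` to the golden ratio. -/
noncomputable def goldenEmbedding : QuadraticAlgebra ℚ 1 1 →ₐ[ℚ] ℝ :=
  QuadraticAlgebra.lift ⟨Real.goldenRatio, by
    rw [← sq, Real.goldenRatio_sq, one_smul, one_smul, add_comm]⟩

theorem goldenEmbedding_apply (z : QuadraticAlgebra ℚ 1 1) :
    goldenEmbedding z = z.re + z.im * Real.goldenRatio :=
  (QuadraticAlgebra.lift_apply_apply _ z).trans (by simp [Algebra.smul_def])

theorem fieldRange_goldenEmbedding : goldenEmbedding.fieldRange = K := by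
  apply le_antisymm
  · rintro _ ⟨z, rfl⟩
    have h5 : √5 ∈ K := IntermediateField.mem_adjoin_simple_self ℚ _
    have hq (q : ℚ) : (q : ℝ) ∈ K := K.algebraMap_mem q
    have hφ : Real.goldenRatio ∈ K := by
      have := K.mul_mem (K.add_mem K.one_mem h5) (hq (1 / 2))
      convert this using 1
      push_cast
      rw [Real.goldenRatio]
      ring
    change goldenEmbedding z ∈ K
    rw [goldenEmbedding_apply]
    exact K.add_mem (hq _) (K.mul_mem (hq _) hφ)
  · refine IntermediateField.adjoin_simple_le_iff.mpr ⟨⟨-1, 2⟩, ?_⟩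
    change goldenEmbedding _ = _
    rw [goldenEmbedding_apply, Real.goldenRatio]
    push_cast
    ring

/-- `K` is the quadratic algebra `ℚ[ω]` with `ω² = 1 + ω`. -/
noncomputable def quadraticAlgebraEquiv : QuadraticAlgebra ℚ 1 1 ≃ₐ[ℚ] K :=
  (AlgEquiv.ofInjectiveField goldenEmbedding).trans
    (IntermediateField.equivOfEq fieldRange_goldenEmbedding)

instance numberField_K : NumberField K where
  to_charZero := inferInstance
  to_finiteDimensional := Module.Finite.equiv quadraticAlgebraEquiv.toLinearEquiv

theorem norm_quadraticAlgebraEquiv (z : QuadraticAlgebra ℚ 1 1) :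
    Algebra.norm ℚ (quadraticAlgebraEquiv z) = z.norm := by
  rw [Algebra.norm_eq_of_algEquiv, ← QuadraticAlgebra.det_toLinearMap_eq_norm]
  rfl

theorem isIntegral_quadraticAlgebra_intCast (m n : ℤ) :
    IsIntegral ℤ (⟨m, n⟩ : QuadraticAlgebra ℚ 1 1) := by
  have hω : IsIntegral ℤ (⟨0, 1⟩ : QuadraticAlgebra ℚ 1 1) := by
    refine ⟨X ^ 2 - X - 1, by monicity!, ?_⟩
    ext <;> simp [sq, QuadraticAlgebra.re_one, QuadraticAlgebra.im_one]
  have : (⟨m, n⟩ : QuadraticAlgebra ℚ 1 1) = algebraMap ℤ _ m + algebraMap ℤ _ n * ⟨0, 1⟩ := by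
    ext <;> simp
  rw [this]
  exact isIntegral_algebraMap.add (isIntegral_algebraMap.mul hω)

instance isPrincipalIdealRing_OK : IsPrincipalIdealRing OK := by
  refine isPrincipalIdealRing_of_exists_norm_sub_lt_one fun z => ?_
  obtain ⟨⟨r, s⟩, rfl⟩ := quadraticAlgebraEquiv.surjective z
  refine ⟨⟨quadraticAlgebraEquiv ⟨round r, round s⟩,
    (isIntegral_quadraticAlgebra_intCast _ _).map
      (quadraticAlgebraEquiv.toAlgHom.restrictScalars ℤ)⟩, ?_⟩
  change |Algebra.norm ℚ (quadraticAlgebraEquiv _ - quadraticAlgebraEquiv _)| < 1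
  rw [← map_sub, norm_quadraticAlgebraEquiv, QuadraticAlgebra.norm_def]
  simp only [QuadraticAlgebra.re_sub, QuadraticAlgebra.im_sub]
  have hr := abs_le.mp (abs_sub_round r)
  have hs := abs_le.mp (abs_sub_round s)
  generalize r - round r = e at *
  generalize s - round s = f at *
  rw [abs_lt]
  constructor <;> nlinarith

theorem prime_dvd_of_pow_add_pow_add_pow_eq_zero {R : Type*} [CommRing R] {d a b c : R} {n : ℕ}
    (hd : Prime d) (hn : n ≠ 0) (h : a ^ n + b ^ n + c ^ n = 0) (ha : d ∣ a) (hb : d ∣ b) :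
    d ∣ c := by
  refine hd.dvd_of_dvd_pow (n := n) ?_
  rw [show c ^ n = -(a ^ n + b ^ n) by linear_combination h]
  exact ((dvd_pow ha hn).add (dvd_pow hb hn)).neg_right

/-- If a prime divides `abc` and `A² + AB + B²`, where `A + B + C = 0` for the `n`-th powers
`A, B, C` of `a, b, c`, then it divides each of `a`, `b`, `c`. -/
theorem prime_dvd_of_dvd_mul_of_dvd_sq_add_mul_add_sq {R : Type*} [CommRing R] {d a b c : R}
    {n : ℕ} (hd : Prime d) (hn : n ≠ 0) (h : a ^ n + b ^ n + c ^ n = 0) (habc : d ∣ a * b * c)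
    (hq : d ∣ (a ^ n) ^ 2 + a ^ n * b ^ n + (b ^ n) ^ 2) : d ∣ a ∧ d ∣ b ∧ d ∣ c := by
  have key {x : R} (hx : d ∣ (x ^ n) ^ 2) : d ∣ x := hd.dvd_of_dvd_pow (hd.dvd_of_dvd_pow hx)
  have hab : d ∣ a ∧ d ∣ b := by
    rcases hd.dvd_or_dvd habc with hab | hc
    · rcases hd.dvd_or_dvd hab with ha | hb
      · refine ⟨ha, key ?_⟩
        rw [show (b ^ n) ^ 2 = ((a ^ n) ^ 2 + a ^ n * b ^ n + (b ^ n) ^ 2)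
          - a ^ n * (a ^ n + b ^ n) by ring]
        exact hq.sub ((dvd_pow ha hn).mul_right _)
      · refine ⟨key ?_, hb⟩
        rw [show (a ^ n) ^ 2 = ((a ^ n) ^ 2 + a ^ n * b ^ n + (b ^ n) ^ 2)
          - b ^ n * (a ^ n + b ^ n) by ring]
        exact hq.sub ((dvd_pow hb hn).mul_right _)
    · have hc' := dvd_pow hc hn
      constructor <;> apply key
      · rw [show (a ^ n) ^ 2 = ((a ^ n) ^ 2 + a ^ n * b ^ n + (b ^ n) ^ 2)
          + c ^ n * b ^ n by linear_combination -b ^ n * h]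
        exact hq.add (hc'.mul_right _)
      · rw [show (b ^ n) ^ 2 = ((a ^ n) ^ 2 + a ^ n * b ^ n + (b ^ n) ^ 2)
          + c ^ n * a ^ n by linear_combination -a ^ n * h]
        exact hq.add (hc'.mul_right _)
  exact ⟨hab.1, hab.2, prime_dvd_of_pow_add_pow_add_pow_eq_zero hd hn h hab.1 hab.2⟩

set_option maxHeartbeats 1000000 in
/-- **Lemma 2 (partial).** Let `p ≥ 5` be prime, `a, b, c` nonzero coprime elements
of `O_K` with `a^p + b^p + c^p = 0`, and `A = a^p`, `B = b^p`, `C = c^p`.  If `𝔮`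
is a nonzero prime ideal of `O_K` not containing `2` with `v_𝔮(a·b·c) ≥ 1`, then
`v_𝔮(c₄) = 0` and `p ∣ v_𝔮(Δ)`, where `c₄ = 16(A² + AB + B²)` and
`Δ = 16(ABC)²`. -/
theorem valuation_of_invariants_at_multiplicative_primes
    (p : ℕ) (hp : p.Prime) (hp5 : 5 ≤ p)
    (a b c : OK) (ha : a ≠ 0) (hb : b ≠ 0) (hc : c ≠ 0)
    (hcop : ∀ d : OK, d ∣ a → d ∣ b → d ∣ c → IsUnit d)
    (hfermat : a ^ p + b ^ p + c ^ p = 0)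
    (A B C : OK) (hA : A = a ^ p) (hB : B = b ^ p) (hC : C = c ^ p)
    (𝔮 : Ideal OK) (h𝔮 : 𝔮.IsPrime) (h𝔮0 : 𝔮 ≠ ⊥) (h2 : (2 : OK) ∉ 𝔮)
    (habc : a * b * c ∈ 𝔮) :
    16 * (A ^ 2 + A * B + B ^ 2) ∉ 𝔮 ∧
    ∃ k : ℕ, 16 * (A * B * C) ^ 2 ∈ 𝔮 ^ (p * k) ∧
      16 * (A * B * C) ^ 2 ∉ 𝔮 ^ (p * k + 1) := by
  have hp0 : p ≠ 0 := hp.ne_zero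
  obtain ⟨d, rfl⟩ := (IsPrincipalIdealRing.principal 𝔮).principal
  rw [Ideal.submodule_span_eq] at *
  have hd0 : d ≠ 0 := by simpa using h𝔮0
  have hd : Prime d := (Ideal.span_singleton_prime hd0).mp h𝔮
  simp only [Ideal.span_singleton_pow, Ideal.mem_span_singleton] at *
  have h16 : ¬ d ∣ 16 := fun h => h2 (hd.dvd_of_dvd_pow (n := 4) (by norm_num [h]))
  subst hA hB hC
  constructor
  · intro h
    obtain ⟨h1, h2, h3⟩ := prime_dvd_of_dvd_mul_of_dvd_sq_add_mul_add_sq hd hp0 hfermat habc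
      ((hd.dvd_or_dvd h).resolve_left h16)
    exact hd.not_isUnit (hcop d h1 h2 h3)
  · obtain ⟨u, hu, hdu⟩ := (FiniteMultiplicity.of_prime_left hd
      (mul_ne_zero (mul_ne_zero ha hb) hc)).exists_eq_pow_mul_and_not_dvd
    generalize multiplicity d (a * b * c) = m at hu
    have hΔ : 16 * (a ^ p * b ^ p * c ^ p) ^ 2 = d ^ (p * (2 * m)) * (16 * (u ^ p) ^ 2) := by
      rw [← mul_pow, ← mul_pow, hu]
      ring
    refine ⟨2 * m, hΔ ▸ dvd_mul_right _ _, fun h => ?_⟩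
    rw [hΔ, pow_succ, mul_dvd_mul_iff_left (pow_ne_zero _ hd0)] at h
    exact hdu (hd.dvd_of_dvd_pow (hd.dvd_of_dvd_pow ((hd.dvd_or_dvd h).resolve_left h16)))
end
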